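/- Let α, ν > 0 with ν > α², let u₀ ∈ H¹(ℝ³;ℝ³) be divergence-free, let r* ∈ [−3/2, ∞) with limsup_{ρ→0⁺} ρ^{−2r*−3} ∫_{|ξ|≤ρ} |û₀(ξ)|² dξ < ∞ (no condition when r* = −3/2), and let u : [0,∞) → H¹(ℝ³;ℝ³), u(0) = u₀, satisfy: (i) t ↦ ‖u(t)‖²_{L²} + α²‖∇u(t)‖²_{L²} is locally absolutely continuous with derivative ≤ −2ν‖∇u(t)‖²_{L²} a.e.; (ii) û(ξ,t) = e^{tM(ξ)} û₀(ξ) − ∫₀ᵗ e^{(t−τ)M(ξ)} G(ξ,τ) dτ with M(ξ) = −ν|ξ|²/(1+α²|ξ|²) and |G(ξ,τ)| ≤ K|ξ|‖u(τ)‖²_{L²} for some K > 0. Then (second bootstrap step) there exist constants C₁, C₂ > 0 such that for all t > 0, ‖u(t)‖²_{L²} + α²‖∇u(t)‖²_{L²} ≤ C₁ (C₂ + t)^{−min{3/2 + r*, 3/2}}. -/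

import Mathlib

open MeasureTheory Filter Topology Metric

/-! A Fourier-splitting argument. Let `E` be the `H¹_α` energy and let the time-dependent radius
`ρ = √(m / (ν T))`, `T = C + t`, separate low from high frequencies. At high frequencies the
dissipation controls `E`; at low frequencies Duhamel's formula gives
`|û(ξ,t)| ≤ |û₀(ξ)| + K |ξ| ∫₀ᵗ ‖u‖²`, whose two terms contribute a multiple of `T^(-(3/2 + r*))`
(decay character) and of `T^(-5/2) (∫₀ᵗ ‖u‖²)²` (volume of the ball). Hence
`E' ≤ -(m / T) (E - c₀ T^(-(3/2 + r*)) - c₁ T^(-5/2) (∫₀ᵗ ‖u‖²)²)`, so that a decay rate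
`a < 1` of `E` improves to the rate `min (3/2 + r*) (1/2 + 2 a)`. Starting from the trivial rate
`0`, two such steps give first `min (3/2 + r*) (1/2)` and then `min (3/2 + r*) (3/2)`. -/

/-- `f` is an indefinite integral of `g` on `[0, ∞)`: it is locally absolutely continuous there with
almost everywhere derivative `g`, which we express through the fundamental theorem of calculus. -/
structure IsIndefiniteIntegral (f g : ℝ → ℝ) : Prop where
  intervalIntegrable : ∀ t, 0 ≤ t → IntervalIntegrable g volume 0 t
  eq_add_integral : ∀ t, 0 ≤ t → f t = f 0 + ∫ s in (0 : ℝ)..t, g s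

namespace IsIndefiniteIntegral

variable {f g φ ψ : ℝ → ℝ}

theorem of_hasDerivAt (hφ : ∀ t, 0 ≤ t → HasDerivAt φ (ψ t) t)
    (hψ : ContinuousOn ψ (Set.Ici 0)) : IsIndefiniteIntegral φ ψ := by
  have hint : ∀ t, 0 ≤ t → IntervalIntegrable ψ volume 0 t := fun t ht =>
    (hψ.mono (Set.uIcc_of_le ht ▸ Set.Icc_subset_Ici_self)).intervalIntegrable
  refine ⟨hint, fun t ht => ?_⟩
  rw [intervalIntegral.integral_eq_sub_of_hasDerivAt _ (hint t ht), add_sub_cancel]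
  rw [Set.uIcc_of_le ht]
  exact fun x hx => hφ x hx.1

theorem sub (hf : IsIndefiniteIntegral f g) (hφ : IsIndefiniteIntegral φ ψ) :
    IsIndefiniteIntegral (fun t => f t - φ t) (fun t => g t - ψ t) := by
  refine ⟨fun t ht => (hf.1 t ht).sub (hφ.1 t ht), fun t ht => ?_⟩
  rw [intervalIntegral.integral_sub (hf.1 t ht) (hφ.1 t ht), hf.2 t ht, hφ.2 t ht]
  ring

theorem continuousOn_Icc (hf : IsIndefiniteIntegral f g) {t : ℝ} (ht : 0 ≤ t) :
    ContinuousOn f (Set.Icc 0 t) := by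
  have hprim : ContinuousOn (fun x => ∫ s in (0 : ℝ)..x, g s) (Set.uIcc 0 t) :=
    intervalIntegral.continuousOn_primitive_interval
      ((intervalIntegrable_iff' (by finiteness)).1 (hf.intervalIntegrable t ht))
  rw [Set.uIcc_of_le ht] at hprim
  exact (continuousOn_const.add hprim).congr fun x hx => hf.eq_add_integral x hx.1

theorem integral_eq_sub (hf : IsIndefiniteIntegral f g) {a b : ℝ} (ha : 0 ≤ a) (hb : 0 ≤ b) :
    ∫ s in a..b, g s = f b - f a := by
  rw [← intervalIntegral.integral_interval_sub_left (hf.intervalIntegrable b hb)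
    (hf.intervalIntegrable a ha), hf.eq_add_integral a ha, hf.eq_add_integral b hb]
  ring

theorem nonpos (hf : IsIndefiniteIntegral f g) (h0 : f 0 ≤ 0)
    (hg : ∀ᵐ s ∂volume.restrict (Set.Ioi 0), 0 < f s → g s ≤ 0) {t : ℝ} (ht : 0 ≤ t) :
    f t ≤ 0 := by
  by_contra! hpos
  -- After the last time `a` at which `f ≤ 0`, the function is positive and so cannot grow.
  set S : Set ℝ := {x ∈ Set.Icc 0 t | f x ≤ 0}
  have hSbdd : BddAbove S := ⟨t, fun x hx => hx.1.2⟩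
  have hSclosed : IsClosed S := isClosed_Icc.isClosed_le (hf.continuousOn_Icc ht) continuousOn_const
  obtain ⟨⟨ha0, hat⟩, hfa⟩ : sSup S ∈ S := hSclosed.csSup_mem ⟨0, ⟨le_rfl, ht⟩, h0⟩ hSbdd
  set a := sSup S
  have hpos_after : ∀ x ∈ Set.Ioc a t, 0 < f x := fun x hx => by
    by_contra! hfx
    exact (le_csSup hSbdd ⟨⟨ha0.trans hx.1.le, hx.2⟩, hfx⟩).not_gt hx.1
  have hint : ∫ s in a..t, g s ≤ 0 := by
    rw [intervalIntegral.integral_of_le hat]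
    refine integral_nonpos_of_ae ?_
    filter_upwards [ae_restrict_mem measurableSet_Ioc, ae_restrict_of_ae_restrict_of_subset
      (fun x hx => ha0.trans_lt hx.1) hg] with s hs hgs
    exact hgs (hpos_after s hs)
  linarith [hf.integral_eq_sub ha0 ht]

theorem le_of_ae_le (hf : IsIndefiniteIntegral f g) (hφ : IsIndefiniteIntegral φ ψ)
    (h0 : f 0 ≤ φ 0) (hg : ∀ᵐ s ∂volume.restrict (Set.Ioi 0), φ s < f s → g s ≤ ψ s)
    {t : ℝ} (ht : 0 ≤ t) : f t ≤ φ t :=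
  sub_nonpos.1 <| (hf.sub hφ).nonpos (sub_nonpos.2 h0)
    (hg.mono fun _ hs hlt => sub_nonpos.2 (hs (sub_pos.1 hlt))) ht

theorem le_initial (hf : IsIndefiniteIntegral f g)
    (hg : ∀ᵐ s ∂volume.restrict (Set.Ioi 0), g s ≤ 0) {t : ℝ} (ht : 0 ≤ t) : f t ≤ f 0 :=
  hf.le_of_ae_le (of_hasDerivAt (fun t _ => hasDerivAt_const t (f 0)) continuousOn_const) le_rfl
    (hg.mono fun _ hs _ => hs) ht

end IsIndefiniteIntegral

theorem isIndefiniteIntegral_const_mul_add_rpow (B b : ℝ) {C : ℝ} (hC : 0 < C) :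
    IsIndefiniteIntegral (fun t => B * (C + t) ^ (-b)) fun t => B * (-b * (C + t) ^ (-b - 1)) := by
  have hpos : ∀ t : ℝ, 0 ≤ t → C + t ≠ 0 := fun t ht => by positivity
  refine .of_hasDerivAt (fun t ht => ?_) ?_
  · simpa using (((hasDerivAt_id t).const_add C).rpow_const (p := -b)
      (Or.inl (hpos t ht))).const_mul B
  · exact continuousOn_const.mul (continuousOn_const.mul
      (ContinuousOn.rpow_const (by fun_prop) fun t ht => Or.inl (hpos t ht)))

/-! ### Decay from differential inequalities -/

theorem IsIndefiniteIntegral.exists_le_rpow {f g : ℝ → ℝ} (hf : IsIndefiniteIntegral f g)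
    {m C B₀ b : ℝ} (hm : 0 ≤ m) (hC : 0 < C) (hbm : b < m)
    (hg : ∀ᵐ s ∂volume.restrict (Set.Ioi 0),
      g s ≤ -(m / (C + s)) * (f s - B₀ * (C + s) ^ (-b))) :
    ∃ B > 0, ∀ t, 0 ≤ t → f t ≤ B * (C + t) ^ (-b) := by
  -- `B (C + t)^(-b)` is a supersolution as soon as `b B ≤ m (B - B₀)`.
  obtain ⟨B, hB, hBinit, hBm⟩ : ∃ B > 0, f 0 * C ^ b ≤ B ∧ m * B₀ / (m - b) ≤ B :=
    ⟨max 1 (max (f 0 * C ^ b) (m * B₀ / (m - b))), by positivity, by simp, by simp⟩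
  have hsuper : b * B ≤ m * (B - B₀) := by
    rw [div_le_iff₀ (sub_pos.2 hbm)] at hBm
    linarith
  refine ⟨B, hB, fun t ht =>
    hf.le_of_ae_le (isIndefiniteIntegral_const_mul_add_rpow B b hC) ?_ ?_ ht⟩
  · rwa [add_zero, Real.rpow_neg hC.le, ← div_eq_mul_inv, le_div_iff₀ (by positivity)]
  · filter_upwards [hg, ae_restrict_mem measurableSet_Ioi] with s hgs (hs : 0 < s) hlt
    have hT : 0 < C + s := by positivity
    calc g s ≤ -(m / (C + s)) * (f s - B₀ * (C + s) ^ (-b)) := hgs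
      _ ≤ -(m / (C + s)) * (B * (C + s) ^ (-b) - B₀ * (C + s) ^ (-b)) :=
        mul_le_mul_of_nonpos_left (by linarith) (neg_nonpos.2 (by positivity))
      _ = -(m * (B - B₀)) * ((C + s) ^ (-b) / (C + s)) := by ring
      _ ≤ -(b * B) * ((C + s) ^ (-b) / (C + s)) := by gcongr
      _ = B * (-b * (C + s) ^ (-b - 1)) := by rw [Real.rpow_sub_one hT.ne']; ring

theorem intervalIntegral_le_of_le_rpow {L : ℝ → ℝ} {A C a t : ℝ} (hA : 0 ≤ A) (hC : 0 < C)
    (ha : a < 1) (ht : 0 ≤ t) (hL : IntervalIntegrable L volume 0 t)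
    (hLA : ∀ s ∈ Set.Icc 0 t, L s ≤ A * (C + s) ^ (-a)) :
    ∫ s in (0 : ℝ)..t, L s ≤ A / (1 - a) * (C + t) ^ (1 - a) := by
  have hrpow : IntervalIntegrable (fun s => A * (C + s) ^ (-a)) volume 0 t :=
    (isIndefiniteIntegral_const_mul_add_rpow A a hC).continuousOn_Icc ht
      |>.intervalIntegrable_of_Icc ht
  calc ∫ s in (0 : ℝ)..t, L s ≤ ∫ s in (0 : ℝ)..t, A * (C + s) ^ (-a) :=
        intervalIntegral.integral_mono_on ht hL hrpow hLA
    _ = A * (((C + t) ^ (1 - a) - C ^ (1 - a)) / (1 - a)) := by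
        rw [intervalIntegral.integral_const_mul,
          intervalIntegral.integral_comp_add_left (fun x => x ^ (-a)),
          integral_rpow (Or.inl (by linarith)), add_zero, neg_add_eq_sub]
    _ ≤ A * ((C + t) ^ (1 - a) / (1 - a)) := by
        have : 0 < 1 - a := sub_pos.2 ha
        gcongr
        exact sub_le_self _ (by positivity)
    _ = A / (1 - a) * (C + t) ^ (1 - a) := by ring

theorem add_mul_rpow_mul_sq_le {T Λ c₀ c₁ κ σ q a b : ℝ} (hT : 1 ≤ T) (hc₀ : 0 ≤ c₀)
    (hc₁ : 0 ≤ c₁) (hΛ : 0 ≤ Λ) (hΛκ : Λ ≤ κ * T ^ (1 - a)) (hbσ : b ≤ σ)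
    (hbq : b ≤ q - 2 + 2 * a) :
    c₀ * T ^ (-σ) + c₁ * T ^ (-q) * Λ ^ 2 ≤ (c₀ + c₁ * κ ^ 2) * T ^ (-b) := by
  have hT0 : 0 < T := by positivity
  calc c₀ * T ^ (-σ) + c₁ * T ^ (-q) * Λ ^ 2
      ≤ c₀ * T ^ (-σ) + c₁ * T ^ (-q) * (κ * T ^ (1 - a)) ^ 2 := by gcongr
    _ = c₀ * T ^ (-σ) + c₁ * κ ^ 2 * T ^ (-(q - 2 + 2 * a)) := by
        rw [show -(q - 2 + 2 * a) = -q + ((1 - a) + (1 - a)) by ring, Real.rpow_add hT0,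
          Real.rpow_add hT0]
        ring
    _ ≤ c₀ * T ^ (-b) + c₁ * κ ^ 2 * T ^ (-b) := by gcongr
    _ = (c₀ + c₁ * κ ^ 2) * T ^ (-b) := by ring

theorem IsIndefiniteIntegral.exists_le_rpow_of_bootstrap {E D L : ℝ → ℝ}
    (hE : IsIndefiniteIntegral E D) {m C c₀ c₁ σ q : ℝ} (hm : 0 ≤ m) (hC : 1 ≤ C) (hc₀ : 0 ≤ c₀)
    (hc₁ : 0 ≤ c₁) (hL : ∀ t, 0 ≤ t → IntervalIntegrable L volume 0 t) (hL0 : ∀ t, 0 ≤ L t)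
    (hLE : ∀ t, 0 ≤ t → L t ≤ E t)
    (hD : ∀ᵐ s ∂volume.restrict (Set.Ioi 0), D s ≤ -(m / (C + s)) *
      (E s - (c₀ * (C + s) ^ (-σ) + c₁ * (C + s) ^ (-q) * (∫ τ in (0 : ℝ)..s, L τ) ^ 2)))
    {A a b : ℝ} (hA : 0 ≤ A) (ha : a < 1) (hEA : ∀ t, 0 ≤ t → E t ≤ A * (C + t) ^ (-a))
    (hbm : b < m) (hbσ : b ≤ σ) (hbq : b ≤ q - 2 + 2 * a) :
    ∃ B > 0, ∀ t, 0 ≤ t → E t ≤ B * (C + t) ^ (-b) := by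
  have hC0 : 0 < C := by positivity
  refine hE.exists_le_rpow (B₀ := c₀ + c₁ * (A / (1 - a)) ^ 2) hm hC0 hbm ?_
  filter_upwards [hD, ae_restrict_mem measurableSet_Ioi] with s hDs (hs : 0 < s)
  have hΛ : ∫ τ in (0 : ℝ)..s, L τ ≤ A / (1 - a) * (C + s) ^ (1 - a) :=
    intervalIntegral_le_of_le_rpow hA hC0 ha hs.le (hL s hs.le)
      fun τ hτ => (hLE τ hτ.1).trans (hEA τ hτ.1)
  refine hDs.trans (mul_le_mul_of_nonpos_left (sub_le_sub_left ?_ _)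
    (neg_nonpos.2 (by positivity)))
  exact add_mul_rpow_mul_sq_le (by linarith) hc₀ hc₁
    (intervalIntegral.integral_nonneg hs.le fun τ _ => hL0 τ) hΛ hbσ hbq

theorem IsIndefiniteIntegral.exists_le_rpow_of_bootstrap_twice {E D L : ℝ → ℝ}
    (hE : IsIndefiniteIntegral E D) {m C c₀ c₁ σ q : ℝ} (hC : 1 ≤ C) (hc₀ : 0 ≤ c₀)
    (hc₁ : 0 ≤ c₁) (hL : ∀ t, 0 ≤ t → IntervalIntegrable L volume 0 t) (hL0 : ∀ t, 0 ≤ L t)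
    (hLE : ∀ t, 0 ≤ t → L t ≤ E t) (hD0 : ∀ᵐ s ∂volume.restrict (Set.Ioi 0), D s ≤ 0)
    (hD : ∀ᵐ s ∂volume.restrict (Set.Ioi 0), D s ≤ -(m / (C + s)) *
      (E s - (c₀ * (C + s) ^ (-σ) + c₁ * (C + s) ^ (-q) * (∫ τ in (0 : ℝ)..s, L τ) ^ 2)))
    (hσ : 0 ≤ σ) (hq2 : 2 ≤ q) (hq3 : q < 3) (hqm : 3 * (q - 2) < m) :
    ∃ B > 0, ∀ t, 0 ≤ t → E t ≤ B * (C + t) ^ (-min σ (3 * (q - 2))) := by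
  have improve {A a b : ℝ} := hE.exists_le_rpow_of_bootstrap (A := A) (a := a) (b := b)
    (by linarith) hC hc₀ hc₁ hL hL0 hLE hD
  have rate_zero : ∀ t, 0 ≤ t → E t ≤ E 0 * (C + t) ^ (-(0 : ℝ)) := fun t ht => by
    simpa using hE.le_initial hD0 ht
  obtain ⟨A, hA, rate_one⟩ := improve (b := min σ (q - 2)) ((hL0 0).trans (hLE 0 le_rfl)) one_pos
    rate_zero ((min_le_right _ _).trans_lt (by linarith)) (min_le_left _ _)
    ((min_le_right _ _).trans (by linarith))
  refine improve hA.le ((min_le_right _ _).trans_lt (by linarith)) rate_one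
    ((min_le_right _ _).trans_lt hqm) (min_le_left _ _) ?_
  rcases min_cases σ (q - 2) with ⟨h, -⟩ | ⟨h, -⟩ <;> rw [h]
  · exact (min_le_left _ _).trans (by linarith)
  · exact (min_le_right _ _).trans (by linarith)

/-! ### Fourier splitting -/

/-- The symbol `M(ξ) = -ν|ξ|² / (1 + α²|ξ|²)` of the linear Navier–Stokes–Voigt evolution. -/
noncomputable def voigtSymbol {E : Type*} [Norm E] (ν α : ℝ) (ξ : E) : ℝ :=
  -(ν * ‖ξ‖ ^ 2) / (1 + α ^ 2 * ‖ξ‖ ^ 2)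

/-- The energy `‖u‖²_{L²} + α²‖∇u‖²_{L²}` of a field with Fourier transform `f`, by Plancherel. -/
noncomputable def voigtEnergy {E V : Type*} [Norm E] [MeasurableSpace E] [Norm V] (μ : Measure E)
    (α : ℝ) (f : E → V) : ℝ :=
  ∫ ξ, (1 + α ^ 2 * ‖ξ‖ ^ 2) * ‖f ξ‖ ^ 2 ∂μ

/-- The part of `‖u‖²_{L²}` carried by the frequencies `|ξ| ≤ ρ`, for `f` the Fourier transform of
`u`. Its order of vanishing as `ρ → 0` determines the decay character of `u`. -/
noncomputable def lowFrequencyMass {E V : Type*} [SeminormedAddCommGroup E] [MeasurableSpace E]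
    [Norm V] (μ : Measure E) (f : E → V) (ρ : ℝ) : ℝ :=
  ∫ ξ in closedBall (0 : E) ρ, ‖f ξ‖ ^ 2 ∂μ

theorem exists_lowFrequencyMass_le_rpow {E V : Type*} [SeminormedAddCommGroup E] [MeasurableSpace E]
    [Norm V] {μ : Measure E} {F : E → V} (hF : Integrable (fun ξ => ‖F ξ‖ ^ 2) μ) {p : ℝ}
    (hchar : p ≠ 0 → ∃ c : ℝ, ∀ᶠ ρ in 𝓝[>] (0 : ℝ), ρ ^ (-p) * lowFrequencyMass μ F ρ ≤ c) :
    ∃ c ≥ 0, ∀ᶠ ρ in 𝓝[>] (0 : ℝ), lowFrequencyMass μ F ρ ≤ c * ρ ^ p := by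
  rcases eq_or_ne p 0 with rfl | hp
  · refine ⟨∫ ξ, ‖F ξ‖ ^ 2 ∂μ, integral_nonneg fun _ => by positivity, .of_forall fun ρ => ?_⟩
    rw [Real.rpow_zero, mul_one]
    exact setIntegral_le_integral hF (.of_forall fun _ => by positivity)
  · obtain ⟨c, hc⟩ := hchar hp
    refine ⟨|c|, abs_nonneg c, ?_⟩
    filter_upwards [hc, self_mem_nhdsWithin] with ρ hρc (hρ : 0 < ρ)
    rw [Real.rpow_neg hρ.le, inv_mul_le_iff₀ (by positivity), mul_comm] at hρc
    exact hρc.trans (by gcongr; exact le_abs_self c)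

theorem voigtSymbol_nonpos {E : Type*} [Norm E] {ν : ℝ} (hν : 0 ≤ ν) (α : ℝ) (ξ : E) :
    voigtSymbol ν α ξ ≤ 0 :=
  div_nonpos_of_nonpos_of_nonneg (neg_nonpos.2 (by positivity)) (by positivity)

theorem norm_duhamel_le {V : Type*} [NormedAddCommGroup V] [NormedSpace ℝ V] {M t k : ℝ}
    (hM : M ≤ 0) (ht : 0 ≤ t) {v : V} {g : ℝ → V} {L : ℝ → ℝ}
    (hL : IntervalIntegrable L volume 0 t) (hg : ∀ τ, ‖g τ‖ ≤ k * L τ) :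
    ‖Real.exp (t * M) • v - ∫ τ in (0 : ℝ)..t, Real.exp ((t - τ) * M) • g τ‖
      ≤ ‖v‖ + k * ∫ τ in (0 : ℝ)..t, L τ := by
  have hexp : ∀ s, 0 ≤ s → ∀ w : V, ‖Real.exp (s * M) • w‖ ≤ ‖w‖ := fun s hs w => by
    rw [norm_smul, Real.norm_eq_abs, Real.abs_exp]
    exact mul_le_of_le_one_left (norm_nonneg w)
      (Real.exp_le_one_iff.2 (mul_nonpos_of_nonneg_of_nonpos hs hM))
  refine (norm_sub_le _ _).trans (add_le_add (hexp t ht v) ?_)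
  rw [← intervalIntegral.integral_const_mul]
  exact intervalIntegral.norm_integral_le_of_norm_le ht (.of_forall fun τ hτ =>
    (hexp _ (sub_nonneg.2 hτ.2) _).trans (hg τ)) (hL.const_mul k)

theorem tendsto_sqrt_div_mul_atTop {ν m : ℝ} (hν : 0 < ν) (hm : 0 < m) :
    Tendsto (fun T => √(m / (ν * T))) atTop (𝓝[>] 0) := by
  have hsq : Tendsto (fun T => m / (ν * T)) atTop (𝓝 0) :=
    tendsto_const_nhds.div_atTop (tendsto_id.const_mul_atTop hν)
  refine tendsto_nhdsWithin_iff.2 ⟨by simpa using hsq.sqrt, ?_⟩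
  filter_upwards [eventually_gt_atTop 0] with T hT
  exact Real.sqrt_pos.2 (by positivity)

section FourierSplitting

variable {E V : Type*} [NormedAddCommGroup E] [MeasurableSpace E] [BorelSpace E]
  [NormedAddCommGroup V] {μ : Measure E} {F U : E → V}

theorem integrable_of_one_add_norm_sq_mul {f : E → ℝ}
    (hf : Integrable (fun ξ => (1 + ‖ξ‖ ^ 2) * f ξ) μ) : Integrable f μ := by
  have hpos : ∀ ξ : E, 0 < 1 + ‖ξ‖ ^ 2 := fun ξ => by positivity
  have hinv : Continuous fun ξ : E => (1 + ‖ξ‖ ^ 2)⁻¹ :=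
    Continuous.inv₀ (by fun_prop) fun ξ => (hpos ξ).ne'
  refine (hf.bdd_mul (c := 1) hinv.aestronglyMeasurable (.of_forall fun ξ => ?_)).congr
    (.of_forall fun ξ => inv_mul_cancel_left₀ (hpos ξ).ne' (f ξ))
  rw [norm_inv, Real.norm_of_nonneg (hpos ξ).le]
  exact inv_le_one_of_one_le₀ (by simp)

theorem integrable_norm_sq_mul_of_one_add_norm_sq_mul {f : E → ℝ}
    (hf : Integrable (fun ξ => (1 + ‖ξ‖ ^ 2) * f ξ) μ) :
    Integrable (fun ξ => ‖ξ‖ ^ 2 * f ξ) μ := by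
  refine (hf.sub (integrable_of_one_add_norm_sq_mul hf)).congr (.of_forall fun ξ => ?_)
  simp only [Pi.sub_apply]
  ring

theorem integrable_voigtEnergy_integrand (α : ℝ)
    (hU : Integrable (fun ξ => (1 + ‖ξ‖ ^ 2) * ‖U ξ‖ ^ 2) μ) :
    Integrable (fun ξ => (1 + α ^ 2 * ‖ξ‖ ^ 2) * ‖U ξ‖ ^ 2) μ := by
  refine ((integrable_of_one_add_norm_sq_mul hU).add
    ((integrable_norm_sq_mul_of_one_add_norm_sq_mul hU).const_mul (α ^ 2))).congr
    (.of_forall fun ξ => ?_)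
  simp only [Pi.add_apply]
  ring

theorem integral_norm_sq_le_voigtEnergy (α : ℝ)
    (hU : Integrable (fun ξ => (1 + ‖ξ‖ ^ 2) * ‖U ξ‖ ^ 2) μ) :
    ∫ ξ, ‖U ξ‖ ^ 2 ∂μ ≤ voigtEnergy μ α U :=
  integral_mono (integrable_of_one_add_norm_sq_mul hU) (integrable_voigtEnergy_integrand α hU)
    fun _ => le_mul_of_one_le_left (by positivity) (le_add_of_nonneg_right (by positivity))

/- For `|ξ| ≤ ρ` the weight `1 + α²|ξ|²` is at most `2`; for `|ξ| > ρ` both of its summands are at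
most `|ξ|² / ρ²`. -/
theorem sq_mul_voigtEnergy_sub_lowFrequencyMass_le {α ρ : ℝ} (hρ : 0 ≤ ρ)
    (hαρ : α ^ 2 * ρ ^ 2 ≤ 1) (hU : Integrable (fun ξ => (1 + ‖ξ‖ ^ 2) * ‖U ξ‖ ^ 2) μ) :
    ρ ^ 2 * (voigtEnergy μ α U - 2 * lowFrequencyMass μ U ρ)
      ≤ 2 * ∫ ξ, ‖ξ‖ ^ 2 * ‖U ξ‖ ^ 2 ∂μ := by
  have hLow : Integrable (fun ξ => 2 * (closedBall 0 ρ).indicator (fun ξ => ‖U ξ‖ ^ 2) ξ) μ :=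
    ((integrable_of_one_add_norm_sq_mul hU).indicator measurableSet_closedBall).const_mul 2
  have hEnergy := integrable_voigtEnergy_integrand α hU
  rw [voigtEnergy, lowFrequencyMass, ← integral_indicator measurableSet_closedBall,
    ← integral_const_mul 2, ← integral_sub hEnergy hLow, ← integral_const_mul,
    ← integral_const_mul]
  refine integral_mono ((hEnergy.sub hLow).const_mul _)
    ((integrable_norm_sq_mul_of_one_add_norm_sq_mul hU).const_mul 2) fun ξ => ?_
  dsimp only
  by_cases hξ : ξ ∈ closedBall 0 ρ
  · have hξρ : ‖ξ‖ ^ 2 ≤ ρ ^ 2 := pow_le_pow_left₀ (norm_nonneg ξ) (by simpa using hξ) 2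
    have hweight : α ^ 2 * ‖ξ‖ ^ 2 - 1 ≤ 0 := by nlinarith [sq_nonneg α]
    calc ρ ^ 2 * ((1 + α ^ 2 * ‖ξ‖ ^ 2) * ‖U ξ‖ ^ 2
            - 2 * (closedBall 0 ρ).indicator (fun ξ => ‖U ξ‖ ^ 2) ξ)
        = (α ^ 2 * ‖ξ‖ ^ 2 - 1) * (ρ ^ 2 * ‖U ξ‖ ^ 2) := by
          rw [Set.indicator_of_mem hξ]; ring
      _ ≤ 0 := mul_nonpos_of_nonpos_of_nonneg hweight (by positivity)
      _ ≤ 2 * (‖ξ‖ ^ 2 * ‖U ξ‖ ^ 2) := by positivity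
  · have hρξ : ρ < ‖ξ‖ := by simpa using hξ
    have hρξ_sq : ρ ^ 2 ≤ ‖ξ‖ ^ 2 := pow_le_pow_left₀ hρ hρξ.le 2
    have hweight : ρ ^ 2 + α ^ 2 * ρ ^ 2 * ‖ξ‖ ^ 2 ≤ 2 * ‖ξ‖ ^ 2 := by nlinarith [sq_nonneg ‖ξ‖]
    calc ρ ^ 2 * ((1 + α ^ 2 * ‖ξ‖ ^ 2) * ‖U ξ‖ ^ 2
            - 2 * (closedBall 0 ρ).indicator (fun ξ => ‖U ξ‖ ^ 2) ξ)
        = (ρ ^ 2 + α ^ 2 * ρ ^ 2 * ‖ξ‖ ^ 2) * ‖U ξ‖ ^ 2 := by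
          rw [Set.indicator_of_notMem hξ]; ring
      _ ≤ 2 * ‖ξ‖ ^ 2 * ‖U ξ‖ ^ 2 := by gcongr
      _ = 2 * (‖ξ‖ ^ 2 * ‖U ξ‖ ^ 2) := by ring

variable [NormedSpace ℝ E] [FiniteDimensional ℝ E] [μ.IsAddHaarMeasure]

theorem lowFrequencyMass_le_of_norm_le {A ρ : ℝ} (hρ : 0 ≤ ρ)
    (hF : Integrable (fun ξ => ‖F ξ‖ ^ 2) μ) (hU : Integrable (fun ξ => ‖U ξ‖ ^ 2) μ)
    (hUF : ∀ᵐ ξ ∂μ, ‖U ξ‖ ≤ ‖F ξ‖ + A * ‖ξ‖) :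
    lowFrequencyMass μ U ρ ≤ 2 * lowFrequencyMass μ F ρ
      + 2 * A ^ 2 * μ.real (ball 0 1) * ρ ^ (Module.finrank ℝ E + 2) := by
  have hconst : IntegrableOn (fun _ : E => 2 * (A ^ 2 * ρ ^ 2)) (closedBall 0 ρ) μ :=
    integrableOn_const measure_closedBall_lt_top.ne
  calc lowFrequencyMass μ U ρ
      ≤ ∫ ξ in closedBall 0 ρ, 2 * ‖F ξ‖ ^ 2 + 2 * (A ^ 2 * ρ ^ 2) ∂μ := by
        refine setIntegral_mono_on_ae hU.integrableOn ((hF.const_mul 2).integrableOn.add hconst)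
          measurableSet_closedBall ?_
        filter_upwards [hUF] with ξ hξ hξρ
        calc ‖U ξ‖ ^ 2 ≤ (‖F ξ‖ + A * ‖ξ‖) ^ 2 := by gcongr
          _ ≤ 2 * (‖F ξ‖ ^ 2 + (A * ‖ξ‖) ^ 2) := add_sq_le
          _ ≤ 2 * (‖F ξ‖ ^ 2 + A ^ 2 * ρ ^ 2) := by
            rw [mul_pow]
            gcongr
            simpa using hξρ
          _ = 2 * ‖F ξ‖ ^ 2 + 2 * (A ^ 2 * ρ ^ 2) := by ring
    _ = 2 * lowFrequencyMass μ F ρ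
          + 2 * A ^ 2 * μ.real (ball 0 1) * ρ ^ (Module.finrank ℝ E + 2) := by
        rw [integral_add (hF.const_mul 2).integrableOn hconst, integral_const_mul,
          setIntegral_const, Measure.addHaar_real_closedBall μ 0 hρ, smul_eq_mul, lowFrequencyMass]
        ring

theorem voigtEnergy_sub_lowFrequency_le {α ν m T c p A : ℝ} (hν : 0 < ν) (hm : 0 < m) (hT : 0 < T)
    (hαT : α ^ 2 * √(m / (ν * T)) ^ 2 ≤ 1)
    (hFc : lowFrequencyMass μ F √(m / (ν * T)) ≤ c * √(m / (ν * T)) ^ p)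
    (hF : Integrable (fun ξ => ‖F ξ‖ ^ 2) μ)
    (hU : Integrable (fun ξ => (1 + ‖ξ‖ ^ 2) * ‖U ξ‖ ^ 2) μ)
    (hUF : ∀ᵐ ξ ∂μ, ‖U ξ‖ ≤ ‖F ξ‖ + A * ‖ξ‖) :
    m / T * (voigtEnergy μ α U - (4 * c * (m / ν) ^ (p / 2) * T ^ (-(p / 2))
        + 4 * μ.real (ball 0 1) * (m / ν) ^ ((Module.finrank ℝ E + 2 : ℝ) / 2)
          * T ^ (-((Module.finrank ℝ E + 2 : ℝ) / 2)) * A ^ 2))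
      ≤ 2 * ν * ∫ ξ, ‖ξ‖ ^ 2 * ‖U ξ‖ ^ 2 ∂μ := by
  set ρ := √(m / (ν * T)) with hρ
  have hρ_sq : ρ ^ 2 = m / (ν * T) := Real.sq_sqrt (by positivity)
  have hρ_rpow : ∀ x : ℝ, ρ ^ x = (m / ν) ^ (x / 2) * T ^ (-(x / 2)) := fun x => by
    rw [hρ, ← Real.rpow_div_two_eq_sqrt x (by positivity), ← div_div,
      Real.div_rpow (by positivity) hT.le, Real.rpow_neg hT.le, div_eq_mul_inv]
  have hρ_pow : ρ ^ (Module.finrank ℝ E + 2) = (m / ν) ^ ((Module.finrank ℝ E + 2 : ℝ) / 2)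
      * T ^ (-((Module.finrank ℝ E + 2 : ℝ) / 2)) := by
    rw [← hρ_rpow]
    exact_mod_cast (Real.rpow_natCast ρ (Module.finrank ℝ E + 2)).symm
  have hlow := lowFrequencyMass_le_of_norm_le (Real.sqrt_nonneg _) hF
    (integrable_of_one_add_norm_sq_mul hU) hUF (ρ := ρ)
  rw [hρ_rpow] at hFc
  rw [hρ_pow] at hlow
  calc _ ≤ m / T * (voigtEnergy μ α U - 2 * lowFrequencyMass μ U ρ) := by gcongr; linarith
    _ = ν * (ρ ^ 2 * (voigtEnergy μ α U - 2 * lowFrequencyMass μ U ρ)) := by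
      rw [hρ_sq]; field_simp
    _ ≤ ν * (2 * ∫ ξ, ‖ξ‖ ^ 2 * ‖U ξ‖ ^ 2 ∂μ) :=
      mul_le_mul_of_nonneg_left (sq_mul_voigtEnergy_sub_lowFrequencyMass_le (Real.sqrt_nonneg _)
        hαT hU) hν.le
    _ = 2 * ν * ∫ ξ, ‖ξ‖ ^ 2 * ‖U ξ‖ ^ 2 ∂μ := by ring

theorem exists_ae_deriv_voigtEnergy_le {α ν m c p K : ℝ} (hν : 0 < ν) (hm : 0 < m) (hc : 0 ≤ c)
    (hF : Integrable (fun ξ => ‖F ξ‖ ^ 2) μ)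
    (hFc : ∀ᶠ ρ in 𝓝[>] (0 : ℝ), lowFrequencyMass μ F ρ ≤ c * ρ ^ p) {U : ℝ → E → V}
    (hU : ∀ t, 0 ≤ t → Integrable (fun ξ => (1 + ‖ξ‖ ^ 2) * ‖U t ξ‖ ^ 2) μ) {Λ : ℝ → ℝ}
    (hUF : ∀ t, 0 ≤ t → ∀ᵐ ξ ∂μ, ‖U t ξ‖ ≤ ‖F ξ‖ + K * ‖ξ‖ * Λ t) {D : ℝ → ℝ}
    (hD : ∀ᵐ s ∂volume.restrict (Set.Ioi (0 : ℝ)),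
      D s ≤ -(2 * ν) * ∫ ξ, ‖ξ‖ ^ 2 * ‖U s ξ‖ ^ 2 ∂μ) :
    ∃ C ≥ 1, ∃ c₀ ≥ 0, ∃ c₁ ≥ 0, ∀ᵐ s ∂volume.restrict (Set.Ioi (0 : ℝ)),
      D s ≤ -(m / (C + s)) * (voigtEnergy μ α (U s) - (c₀ * (C + s) ^ (-(p / 2))
        + c₁ * (C + s) ^ (-((Module.finrank ℝ E + 2 : ℝ) / 2)) * Λ s ^ 2)) := by
  have hα : ∀ᶠ ρ in 𝓝[>] (0 : ℝ), α ^ 2 * ρ ^ 2 ≤ 1 := by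
    have : Tendsto (fun ρ : ℝ => α ^ 2 * ρ ^ 2) (𝓝 0) (𝓝 0) :=
      Continuous.tendsto' (by fun_prop) _ _ (by simp)
    exact (this.mono_left nhdsWithin_le_nhds).eventually_le_const one_pos
  obtain ⟨C, hC, hCT⟩ := (atTop_basis' (1 : ℝ)).eventually_iff.1
    ((tendsto_sqrt_div_mul_atTop hν hm).eventually (hα.and hFc))
  refine ⟨C, hC, 4 * c * (m / ν) ^ (p / 2), by positivity,
    4 * μ.real (ball 0 1) * (m / ν) ^ ((Module.finrank ℝ E + 2 : ℝ) / 2) * K ^ 2,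
    by positivity, ?_⟩
  filter_upwards [hD, ae_restrict_mem measurableSet_Ioi] with s hDs (hs : 0 < s)
  obtain ⟨hαT, hFT⟩ := hCT (le_add_of_nonneg_right hs.le)
  have hsplit := voigtEnergy_sub_lowFrequency_le hν hm (by linarith) hαT hFT hF (hU s hs.le)
    (A := K * Λ s) ((hUF s hs.le).mono fun ξ hξ => hξ.trans_eq (by ring))
  calc D s ≤ -(2 * ν * ∫ ξ, ‖ξ‖ ^ 2 * ‖U s ξ‖ ^ 2 ∂μ) := by rwa [← neg_mul]
    _ ≤ _ := neg_le_neg hsplit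
    _ = _ := by ring

theorem NSV_decay_second_bootstrap_general (hdim : Module.finrank ℝ E = 3)
    {α ν K rstar : ℝ} (hν : 0 < ν) (hrstar : -(3 : ℝ) / 2 ≤ rstar)
    (hF : Integrable (fun ξ => ‖F ξ‖ ^ 2) μ)
    (hchar : rstar ≠ -(3 : ℝ) / 2 → ∃ c : ℝ, ∀ᶠ ρ in 𝓝[>] (0 : ℝ),
      ρ ^ (-(2 * rstar) - 3) * lowFrequencyMass μ F ρ ≤ c)
    {U : ℝ → E → V} (hU : ∀ t, 0 ≤ t → Integrable (fun ξ => (1 + ‖ξ‖ ^ 2) * ‖U t ξ‖ ^ 2) μ)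
    {D : ℝ → ℝ} (hE : IsIndefiniteIntegral (fun t => voigtEnergy μ α (U t)) D)
    (hD : ∀ᵐ s ∂volume.restrict (Set.Ioi (0 : ℝ)),
      D s ≤ -(2 * ν) * ∫ ξ, ‖ξ‖ ^ 2 * ‖U s ξ‖ ^ 2 ∂μ)
    (hL : ∀ t, 0 ≤ t → IntervalIntegrable (fun τ => ∫ η, ‖U τ η‖ ^ 2 ∂μ) volume 0 t)
    (hUF : ∀ t, 0 ≤ t → ∀ᵐ ξ ∂μ,
      ‖U t ξ‖ ≤ ‖F ξ‖ + K * ‖ξ‖ * ∫ τ in (0 : ℝ)..t, ∫ η, ‖U τ η‖ ^ 2 ∂μ) :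
    ∃ C₁ > 0, ∃ C₂ > 0, ∀ t > 0,
      voigtEnergy μ α (U t) ≤ C₁ * (C₂ + t) ^ (-(min (3 / 2 + rstar) (3 / 2))) := by
  obtain ⟨c, hc, hFc⟩ := exists_lowFrequencyMass_le_rpow (p := 2 * rstar + 3) hF fun hp => by
    simpa only [neg_add'] using hchar fun h => hp (by rw [h]; ring)
  obtain ⟨C, hC, c₀, hc₀, c₁, hc₁, hderiv⟩ :=
    exists_ae_deriv_voigtEnergy_le hν two_pos hc hF hFc hU hUF hD
  have hdissip : ∀ᵐ s ∂volume.restrict (Set.Ioi (0 : ℝ)), D s ≤ 0 := hD.mono fun s hs =>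
    hs.trans (mul_nonpos_of_nonpos_of_nonneg (by linarith) (by positivity))
  obtain ⟨B, hB, hBdecay⟩ := hE.exists_le_rpow_of_bootstrap_twice hC hc₀ hc₁ hL
    (fun t => by positivity) (fun t ht => integral_norm_sq_le_voigtEnergy α (hU t ht)) hdissip
    hderiv (by linarith) (by norm_num [hdim]) (by norm_num [hdim]) (by norm_num [hdim])
  have hrate : min ((2 * rstar + 3) / 2) (3 * ((Module.finrank ℝ E + 2 : ℝ) / 2 - 2))
      = min (3 / 2 + rstar) (3 / 2) := by
    rw [hdim]
    congr 1 <;> ring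
  exact ⟨B, hB, C, by positivity, fun t ht => hrate ▸ hBdecay t ht.le⟩

end FourierSplitting

/-- **Decay of weak solutions to the Navier–Stokes–Voigt equations** (second bootstrap step).
Here `û₀ = F0`, `û(t) = Uhat t`, `M(ξ) = -ν|ξ|²/(1+α²|ξ|²)`, and by Plancherel
`‖u(t)‖²_{L²} + α²‖∇u(t)‖²_{L²} = ∫ (1+α²|ξ|²)‖û(ξ,t)‖² dξ`.  Hypothesis (i), the local
absolute continuity of the energy with a.e. derivative `≤ -2ν‖∇u(t)‖²_{L²}`, is encoded
by a locally integrable a.e. derivative `D`; hypothesis (ii) is the Fourier-side Duhamel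
representation with `‖G(ξ,τ)‖ ≤ K|ξ|‖u(τ)‖²_{L²}`. -/
theorem NSV_decay_second_bootstrap
    (α ν K rstar : ℝ) (hα : 0 < α) (hν : 0 < ν) (hνα : α ^ 2 < ν) (hK : 0 < K)
    (hrstar : -(3:ℝ)/2 ≤ rstar)
    (F0 : EuclideanSpace ℝ (Fin 3) → EuclideanSpace ℂ (Fin 3))
    (hH10 : Integrable (fun ξ : EuclideanSpace ℝ (Fin 3) => (1 + ‖ξ‖ ^ 2) * ‖F0 ξ‖ ^ 2))
    (hdiv : ∀ᵐ ξ ∂(volume : Measure (EuclideanSpace ℝ (Fin 3))),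
      (∑ i : Fin 3, (ξ i : ℂ) * F0 ξ i) = 0)
    (hchar : rstar ≠ -(3:ℝ)/2 → ∃ c : ℝ, ∀ᶠ ρ in 𝓝[>] (0:ℝ),
      ρ ^ (-(2 * rstar) - 3) *
        (∫ ξ in closedBall (0 : EuclideanSpace ℝ (Fin 3)) ρ, ‖F0 ξ‖ ^ 2) ≤ c)
    (Uhat : ℝ → EuclideanSpace ℝ (Fin 3) → EuclideanSpace ℂ (Fin 3))
    (hU0 : ∀ᵐ ξ ∂(volume : Measure (EuclideanSpace ℝ (Fin 3))), Uhat 0 ξ = F0 ξ)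
    (hUH1 : ∀ t : ℝ, 0 ≤ t →
      Integrable (fun ξ : EuclideanSpace ℝ (Fin 3) => (1 + ‖ξ‖ ^ 2) * ‖Uhat t ξ‖ ^ 2))
    (D : ℝ → ℝ)
    (hDint : ∀ t : ℝ, 0 ≤ t → IntervalIntegrable D volume 0 t)
    (hE : ∀ t : ℝ, 0 ≤ t →
      (∫ ξ : EuclideanSpace ℝ (Fin 3), (1 + α ^ 2 * ‖ξ‖ ^ 2) * ‖Uhat t ξ‖ ^ 2)
        = (∫ ξ : EuclideanSpace ℝ (Fin 3), (1 + α ^ 2 * ‖ξ‖ ^ 2) * ‖Uhat 0 ξ‖ ^ 2)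
          + ∫ s in (0:ℝ)..t, D s)
    (hEderiv : ∀ᵐ s ∂(volume.restrict (Set.Ioi (0:ℝ))),
      D s ≤ -(2 * ν) * ∫ ξ : EuclideanSpace ℝ (Fin 3), ‖ξ‖ ^ 2 * ‖Uhat s ξ‖ ^ 2)
    (G : EuclideanSpace ℝ (Fin 3) → ℝ → EuclideanSpace ℂ (Fin 3))
    (hGmeas : StronglyMeasurable (Function.uncurry G))
    (hGbound : ∀ ξ : EuclideanSpace ℝ (Fin 3), ∀ τ : ℝ,
      ‖G ξ τ‖ ≤ K * ‖ξ‖ * ∫ η : EuclideanSpace ℝ (Fin 3), ‖Uhat τ η‖ ^ 2)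
    (hL2loc : ∀ t : ℝ, 0 ≤ t →
      IntervalIntegrable (fun τ => ∫ η : EuclideanSpace ℝ (Fin 3), ‖Uhat τ η‖ ^ 2)
        volume 0 t)
    (hDuhamel : ∀ t : ℝ, 0 ≤ t → ∀ᵐ ξ ∂(volume : Measure (EuclideanSpace ℝ (Fin 3))),
      Uhat t ξ = Real.exp (t * (-(ν * ‖ξ‖ ^ 2) / (1 + α ^ 2 * ‖ξ‖ ^ 2))) • F0 ξ
        - ∫ τ in (0:ℝ)..t,
            Real.exp ((t - τ) * (-(ν * ‖ξ‖ ^ 2) / (1 + α ^ 2 * ‖ξ‖ ^ 2))) • G ξ τ) :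
    ∃ C₁ > (0:ℝ), ∃ C₂ > (0:ℝ), ∀ t > (0:ℝ),
      (∫ ξ : EuclideanSpace ℝ (Fin 3), (1 + α ^ 2 * ‖ξ‖ ^ 2) * ‖Uhat t ξ‖ ^ 2)
        ≤ C₁ * (C₂ + t) ^ (-(min (3/2 + rstar) (3/2))) := by
  exact NSV_decay_second_bootstrap_general (by simp) hν hrstar
    (integrable_of_one_add_norm_sq_mul hH10) hchar hUH1 ⟨hDint, hE⟩ hEderiv hL2loc
    fun t ht => (hDuhamel t ht).mono fun ξ hξ => hξ ▸
      norm_duhamel_le (voigtSymbol_nonpos hν.le α ξ) ht (hL2loc t ht) (hGbound ξ)
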